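/- arXiv:2411.09644 — 3 statements merged into one kernel-verified Lean document; each statement's English description precedes it below -/
import Mathlib

section
/- Let H be a separable real Hilbert space with a Hilbert basis (complete orthonormal system) (s_i)_{i∈ℕ₊}; for d ∈ ℕ₊ define the encoder E_d : H → ℝ^d by E_d(u) = (⟨u,s_1⟩, …, ⟨u,s_d⟩). Let K ⊆ H be nonempty and compact, let F : H → H be L-Lipschitz for some L ≥ 0, and let ε > 0. Then there exist d, N ∈ ℕ₊, vectors y_1, …, y_N ∈ H, and a Lipschitz map g : ℝ^d → Δ_N (where Δ_N = {w ∈ ℝ^N : w_i ≥ 0, ∑_{i=1}^N w_i = 1}) such that sup_{u∈K} ‖F(u) − ∑_{n=1}^N g(E_d(u))_n · y_n‖ ≤ ε. -/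
open scoped RealInnerProductSpace

/-!
Choose a finite `δ`-net `c₁, …, c_N` of `K` and let `P u = ∑_{i<d} ⟪u, s i⟫ s i`, with `d` so large
that `‖P cₖ - cₖ‖ ≤ δ` for every net point. Since `P` is a contraction, `P u` then lies within `2δ`
of some net point for each `u ∈ K`.

The weights come from a Lipschitz "soft nearest point" map (`exists_lipschitz_soft_nearest`): it
sends a point `x` of a metric space to simplex weights that charge only those `cₙ` whose distance to
`x` exceeds the distance to the net by at most `δ`. It is evaluated at the decoded point
`∑ xᵢ s i` of a code `x ∈ ℝ^d`, which is a linear, hence Lipschitz, function of `x`. For `u ∈ K` every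
charged `cₙ` is within `6δ` of `u`, so `∑ gₙ F(cₙ)` is within `6 L δ` of `F u`.
-/

/-- The weights are `φₙ / ∑ φ` with `φₙ(x) = max 0 (m(x) + δ - dist x cₙ)` and `m(x)` the distance
from `x` to the net. A nearest net point has `φ = δ`, so the denominator is at least `δ` on the whole
space, which makes the quotient globally Lipschitz. -/
lemma exists_lipschitz_soft_nearest {X : Type*} [PseudoMetricSpace X] {N : ℕ} (hN : 0 < N)
    (c : Fin N → X) {δ : ℝ} (hδ : 0 < δ) :
    ∃ g : X → Fin N → ℝ, ∃ C : NNReal, LipschitzWith C g ∧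
      (∀ x, g x ∈ stdSimplex ℝ (Fin N)) ∧
      ∀ x n k, g x n ≠ 0 → dist x (c n) ≤ dist x (c k) + δ := by
  have hne : (Set.range c).Nonempty := ⟨c ⟨0, hN⟩, Set.mem_range_self _⟩
  set m : X → ℝ := fun x => Metric.infDist x (Set.range c) with hm
  have hmle : ∀ x k, m x ≤ dist x (c k) := fun x k =>
    Metric.infDist_le_dist_of_mem (Set.mem_range_self k)
  have hmlip : ∀ x x', |m x - m x'| ≤ dist x x' := fun x x' => by
    have := (Metric.lipschitz_infDist_pt (Set.range c)).dist_le_mul x x'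
    simpa [Real.dist_eq] using this
  set φ : X → Fin N → ℝ := fun x n => max 0 (m x + δ - dist x (c n)) with hφ
  have hφ0 : ∀ x n, 0 ≤ φ x n := fun x n => le_max_left _ _
  have hφlip : ∀ x x' n, |φ x n - φ x' n| ≤ 2 * dist x x' := fun x x' n => by
    have h1 : |φ x n - φ x' n| ≤ |(m x + δ - dist x (c n)) - (m x' + δ - dist x' (c n))| :=
      abs_max_sub_max_le_max 0 _ 0 _ |>.trans (by simp)
    have h2 := hmlip x x'
    have h3 : |dist x (c n) - dist x' (c n)| ≤ dist x x' := abs_dist_sub_le x x' (c n)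
    rw [abs_le] at h2 h3
    refine h1.trans (abs_le.2 ⟨?_, ?_⟩) <;> linarith [h2.1, h2.2, h3.1, h3.2]
  set S : X → ℝ := fun x => ∑ n, φ x n with hS
  have hφS : ∀ x n, φ x n ≤ S x := fun x n =>
    Finset.single_le_sum (f := φ x) (fun i _ => hφ0 x i) (Finset.mem_univ n)
  have hSδ : ∀ x, δ ≤ S x := fun x => by
    obtain ⟨y, ⟨k, rfl⟩, hk⟩ :=
      (Set.finite_range c).isCompact.exists_infDist_eq_dist hne x
    refine le_trans ?_ (hφS x k)
    refine le_trans ?_ (le_max_right _ _)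
    simp only [hm, hk]
    linarith
  have hSlip : ∀ x x', |S x - S x'| ≤ N * (2 * dist x x') := fun x x' => by
    simp only [hS, ← Finset.sum_sub_distrib]
    refine (Finset.abs_sum_le_sum_abs _ _).trans ?_
    refine (Finset.sum_le_sum fun n _ => hφlip x x' n).trans ?_
    simp
  refine ⟨fun x n => φ x n / S x, Real.toNNReal ((2 + 2 * N) / δ), ?_, ?_, ?_⟩
  · refine LipschitzWith.of_dist_le_mul fun x x' => ?_
    have hC : 0 ≤ (2 + 2 * (N : ℝ)) / δ := by positivity
    rw [Real.coe_toNNReal _ hC]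
    refine (dist_pi_le_iff (by positivity)).2 fun n => ?_
    have hSx := hδ.trans_le (hSδ x)
    have hSx' := hδ.trans_le (hSδ x')
    have key : φ x n / S x - φ x' n / S x' =
        ((φ x n - φ x' n) - φ x' n / S x' * (S x - S x')) / S x := by
      field_simp
      ring
    have hq0 : 0 ≤ φ x' n / S x' := div_nonneg (hφ0 _ _) hSx'.le
    have hq1 : φ x' n / S x' ≤ 1 := (div_le_one hSx').2 (hφS _ _)
    rw [Real.dist_eq, key, abs_div, abs_of_pos hSx]
    have hnum : |(φ x n - φ x' n) - φ x' n / S x' * (S x - S x')| ≤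
        (2 + 2 * N) * dist x x' := by
      refine (abs_sub _ _).trans ?_
      rw [abs_mul, abs_of_nonneg hq0]
      have := mul_le_of_le_one_left (abs_nonneg (S x - S x')) hq1
      linarith [hφlip x x' n, hSlip x x']
    calc _ ≤ (2 + 2 * N) * dist x x' / δ :=
          div_le_div₀ (by positivity) hnum hδ (hSδ x)
      _ = _ := by ring
  · intro x
    have hSx := hδ.trans_le (hSδ x)
    refine ⟨fun n => div_nonneg (hφ0 _ _) hSx.le, ?_⟩
    rw [← Finset.sum_div]
    exact div_self hSx.ne'
  · intro x n k h
    have h1 : φ x n ≠ 0 := fun h0 => h (by simp [h0])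
    by_contra! hlt
    exact h1 (max_eq_left (by linarith [hmle x k]))

/-- Bessel's inequality, in the form that truncating an orthonormal expansion is a contraction. -/
lemma norm_sum_inner_smul_le {H : Type*} [NormedAddCommGroup H] [InnerProductSpace ℝ H]
    {d : ℕ} {e : Fin d → H} (he : Orthonormal ℝ e) (v : H) :
    ‖∑ i, ⟪v, e i⟫ • e i‖ ≤ ‖v‖ := by
  set p := ∑ i, ⟪v, e i⟫ • e i with hp
  have h1 : ⟪p, p⟫ = ⟪v, p⟫ := by
    have h2 : ⟪p, p⟫ = ∑ i, ⟪v, e i⟫ * ⟪v, e i⟫ := by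
      rw [hp, he.inner_sum]
      simp
    rw [h2, hp, inner_sum]
    simp [inner_smul_right]
  have h3 : ‖p‖ * ‖p‖ ≤ ‖v‖ * ‖p‖ := by
    rw [← real_inner_self_eq_norm_mul_norm, h1]
    exact real_inner_le_norm v p
  rcases (norm_nonneg p).eq_or_lt with h | h
  · rw [← h]
    exact norm_nonneg v
  · exact le_of_mul_le_mul_right h3 h

/-- The Hilbert basis `s : HilbertBasis ℕ ℝ H` represents the paper's family `(s_i)_{i∈ℕ₊}`
via the index shift, so the encoder `E_d(u) = (⟨u,s_1⟩,…,⟨u,s_d⟩)` is `fun i : Fin d => ⟪u, s i⟫`. -/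
theorem stmt_14 {H : Type*} [NormedAddCommGroup H] [InnerProductSpace ℝ H] [CompleteSpace H]
    [TopologicalSpace.SeparableSpace H]
    (s : HilbertBasis ℕ ℝ H) (K : Set H) (hK : K.Nonempty) (hKc : IsCompact K)
    (L : NNReal) (F : H → H) (hF : LipschitzWith L F) (ε : ℝ) (hε : 0 < ε) :
    ∃ d N : ℕ, 0 < d ∧ 0 < N ∧ ∃ y : Fin N → H,
      ∃ g : (Fin d → ℝ) → (Fin N → ℝ), ∃ Lg : NNReal, LipschitzWith Lg g ∧
        (∀ x : Fin d → ℝ, g x ∈ stdSimplex ℝ (Fin N)) ∧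
        ∀ u ∈ K, ‖F u - ∑ n : Fin N, g (fun i : Fin d => ⟪u, s i⟫) n • y n‖ ≤ ε := by
  -- The `+ 1` keeps the denominator positive when `L = 0`.
  obtain ⟨δ, hδ, hLδ⟩ : ∃ δ : ℝ, 0 < δ ∧ L * (6 * δ) ≤ ε := by
    have hL : (0 : ℝ) ≤ L := L.2
    refine ⟨ε / (6 * (L + 1)), by positivity, ?_⟩
    have : (L : ℝ) * (6 * (ε / (6 * (L + 1)))) = ε * (L / (L + 1)) := by field_simp
    rw [this]
    exact mul_le_of_le_one_right hε.le ((div_le_one (by positivity)).2 (by linarith))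
  obtain ⟨N, c, hN, hcov⟩ : ∃ (N : ℕ) (c : Fin N → H), 0 < N ∧
      ∀ u ∈ K, ∃ k, dist u (c k) ≤ δ := by
    obtain ⟨t, -, htf, hcov⟩ := hKc.finite_cover_balls hδ
    obtain ⟨N, c, -, hc⟩ := htf.fin_param
    have hnet : ∀ u ∈ K, ∃ k, dist u (c k) ≤ δ := fun u hu => by
      obtain ⟨x, hx, hux⟩ := Set.mem_iUnion₂.1 (hcov hu)
      rw [← hc] at hx
      obtain ⟨k, rfl⟩ := hx
      exact ⟨k, (Metric.mem_ball.1 hux).le⟩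
    obtain ⟨u, hu⟩ := hK
    obtain ⟨k, -⟩ := hnet u hu
    exact ⟨N, c, k.pos, hnet⟩
  obtain ⟨d, hd, hdc⟩ : ∃ d : ℕ, 0 < d ∧
      ∀ k, dist (∑ i : Fin d, ⟪c k, s i⟫ • s i) (c k) ≤ δ := by
    have hev : ∀ k, ∀ᶠ d : ℕ in Filter.atTop,
        dist (∑ i : Fin d, ⟪c k, s i⟫ • s i) (c k) ≤ δ := fun k => by
      have ht := (s.hasSum_repr (c k)).tendsto_sum_nat
      filter_upwards [ht.eventually (Metric.ball_mem_nhds _ hδ)] with d hd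
      rw [Fin.sum_univ_eq_sum_range (fun i => ⟪c k, s i⟫ • s i) d]
      simp only [s.repr_apply_apply, real_inner_comm] at hd ⊢
      exact (Metric.mem_ball.1 hd).le
    obtain ⟨d, h1, h2⟩ :=
      ((Filter.eventually_gt_atTop 0).and (Filter.eventually_all.2 hev)).exists
    exact ⟨d, h1, h2⟩
  obtain ⟨g, C, hg, hgs, hgn⟩ := exists_lipschitz_soft_nearest hN c hδ
  let D : (Fin d → ℝ) →L[ℝ] H :=
    LinearMap.toContinuousLinearMap (Fintype.linearCombination ℝ (fun i : Fin d => s i))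
  have hD : ∀ x, D x = ∑ i : Fin d, x i • s i := fun x => by
    simp [D, Fintype.linearCombination_apply]
  have hon : Orthonormal ℝ (fun i : Fin d => s i) :=
    s.orthonormal.comp _ Fin.val_injective
  refine ⟨d, N, hd, hN, fun n => F (c n), fun x => g (D x), _, hg.comp D.lipschitz,
    fun x => hgs _, fun u hu => ?_⟩
  set P := D (fun i : Fin d => ⟪u, s i⟫) with hP
  obtain ⟨k, hk⟩ := hcov u hu
  have hPk : dist P (∑ i : Fin d, ⟪c k, s i⟫ • s i) ≤ δ := by
    have h := norm_sum_inner_smul_le hon (u - c k)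
    simp only [inner_sub_left, sub_smul, Finset.sum_sub_distrib] at h
    rw [hP, hD, dist_eq_norm]
    rw [dist_eq_norm] at hk
    exact h.trans hk
  have hfar : ∀ n, g P n ≠ 0 → dist u (c n) ≤ 6 * δ := fun n hn => by
    have h1 := hgn P n k hn
    have h2 := dist_triangle P (∑ i : Fin d, ⟪c k, s i⟫ • s i) (c k)
    have h3 := dist_triangle4 u (c k) P (c n)
    rw [dist_comm (c k) P] at h3
    linarith [hdc k]
  obtain ⟨hg0, hg1⟩ := hgs P
  have hsum : F u - ∑ n, g P n • F (c n) = ∑ n, g P n • (F u - F (c n)) := by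
    simp only [smul_sub, Finset.sum_sub_distrib, ← Finset.sum_smul, hg1, one_smul]
  rw [hsum]
  calc ‖∑ n, g P n • (F u - F (c n))‖ ≤ ∑ n, g P n * ε := by
        refine norm_sum_le_of_le _ fun n _ => ?_
        rw [norm_smul, Real.norm_of_nonneg (hg0 n)]
        by_cases hn : g P n = 0
        · simp [hn]
        refine mul_le_mul_of_nonneg_left ?_ (hg0 n)
        rw [← dist_eq_norm]
        exact (hF.dist_le_mul u (c n)).trans
          ((mul_le_mul_of_nonneg_left (hfar n hn) L.2).trans hLδ)
    _ = ε := by rw [← Finset.sum_mul, hg1, one_mul]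
end

section
/- Let H be a separable real Hilbert space with a Hilbert basis (complete orthonormal system) (s_i)_{i∈ℕ₊}; for d ∈ ℕ₊ define the encoder E_d : H → ℝ^d by E_d(u) = (⟨u,s_1⟩, …, ⟨u,s_d⟩), and define softmax_N : ℝ^N → ℝ^N by softmax_N(w)_i = e^{w_i}/∑_{j=1}^N e^{w_j}. Then for every nonempty compact set K ⊆ H, every continuous F : K → H, and every ε > 0, there exist d, N, Q ∈ ℕ₊, ReLU multilayer perceptrons f : ℝ^d → ℝ^N and 𝒱 : ℝ^d → ℝ^{N×Q}, and indices i(n,q) ∈ ℕ₊ for 1 ≤ n ≤ N, 1 ≤ q ≤ Q, such that the attentional neural operator Û : H → H defined by Û(u) = ∑_{n=1}^N softmax_N(f(E_d(u)))_n · ∑_{q=1}^Q 𝒱(E_d(u))_{n,q} · s_{i(n,q)} satisfies sup_{u∈K} ‖F(u) − Û(u)‖ ≤ ε. -/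
/-!
One attention head suffices: for `N = 1` the softmax weight is identically `1`, so the operator is
`u ↦ ∑ q, V (E_d u) q • s (idx q)` and it is enough to approximate finitely many basis coefficients
of `F`.

* Since the image of `K` under `F` is compact and the truncated expansions are 1-Lipschitz, finitely many coefficients
  `⟪F u, s i⟫`, `i < Q`, determine `F u` up to `ε / 2` uniformly in `u ∈ K`
  (`exists_uniform_truncation`).
* Each coefficient is a continuous real function on `K`. The functions `u ↦ φ (E_d u)` with `φ` a
  scalar ReLU network and `d` arbitrary form a lattice (`max`, `min` are expressible through `relu`)
  that interpolates arbitrary values at two points, because basis coefficients separate points. The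
  lattice form of Stone–Weierstrass gives density (`exists_realizable_near`).
* The finitely many scalar networks are assembled into a single vector-valued one; networks of
  different depths are run in parallel thanks to `IsReLUMLP.carry`.
-/

open scoped RealInnerProductSpace

/-- An affine map between finite-dimensional coordinate spaces. -/
def IsAffineMap {n m : ℕ} (f : (Fin n → ℝ) → (Fin m → ℝ)) : Prop :=
  ∃ A : (Fin n → ℝ) →ₗ[ℝ] (Fin m → ℝ), ∃ b : Fin m → ℝ, ∀ x, f x = A x + b

/-- The ReLU activation. -/
def relu (x : ℝ) : ℝ := max x 0

/-- A ReLU multilayer perceptron: a finite alternating composition of affine maps and the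
componentwise application of `relu`, i.e. `x ↦ A_J(σ(A_{J−1}(⋯σ(A_1(x))⋯)))`. -/
inductive IsReLUMLP : ∀ {n m : ℕ}, ((Fin n → ℝ) → (Fin m → ℝ)) → Prop
  | of_affine {n m : ℕ} {f : (Fin n → ℝ) → (Fin m → ℝ)} (hf : IsAffineMap f) : IsReLUMLP f
  | comp {n k m : ℕ} {g : (Fin n → ℝ) → (Fin k → ℝ)} {f : (Fin k → ℝ) → (Fin m → ℝ)}
      (hg : IsReLUMLP g) (hf : IsAffineMap f) :
      IsReLUMLP (fun x => f (fun i => relu (g x i)))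

lemma IsAffineMap.of_components {n m : ℕ} {f : (Fin n → ℝ) → (Fin m → ℝ)}
    (h : ∀ i, ∃ A : (Fin n → ℝ) →ₗ[ℝ] ℝ, ∃ b : ℝ, ∀ x, f x i = A x + b) : IsAffineMap f := by
  choose A b hA using h
  exact ⟨LinearMap.pi A, b, fun x => funext fun i => by simp [hA]⟩

lemma IsAffineMap.component {n m : ℕ} {f : (Fin n → ℝ) → (Fin m → ℝ)} (hf : IsAffineMap f)
    (i : Fin m) : ∃ A : (Fin n → ℝ) →ₗ[ℝ] ℝ, ∃ b : ℝ, ∀ x, f x i = A x + b := by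
  obtain ⟨A, b, h⟩ := hf
  exact ⟨LinearMap.proj i ∘ₗ A, b i, fun x => by simp [h]⟩

lemma IsAffineMap.comp_affine {n k m : ℕ} {g : (Fin n → ℝ) → (Fin k → ℝ)}
    {f : (Fin k → ℝ) → (Fin m → ℝ)} (hf : IsAffineMap f) (hg : IsAffineMap g) :
    IsAffineMap (fun x => f (g x)) := by
  obtain ⟨A, a, hA⟩ := hf
  obtain ⟨B, b, hB⟩ := hg
  exact ⟨A ∘ₗ B, A b + a, fun x => by simp [hA, hB, add_assoc]⟩

/-- Selecting (and possibly repeating) coordinates is affine. -/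
lemma IsAffineMap.reindex {n m : ℕ} (r : Fin m → Fin n) :
    IsAffineMap (fun (x : Fin n → ℝ) i => x (r i)) :=
  .of_components fun i => ⟨LinearMap.proj (r i), 0, fun x => by simp⟩

lemma IsReLUMLP.affine_comp {n k m : ℕ} {g : (Fin n → ℝ) → (Fin k → ℝ)}
    {f : (Fin k → ℝ) → (Fin m → ℝ)} (hg : IsReLUMLP g) (hf : IsAffineMap f) :
    IsReLUMLP (fun x => f (g x)) := by
  cases hg with
  | of_affine hg => exact .of_affine (hf.comp_affine hg)
  | comp hh ha => exact .comp hh (hf.comp_affine ha)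

lemma IsReLUMLP.comp_mlp {n k m : ℕ} {g : (Fin n → ℝ) → (Fin k → ℝ)}
    {f : (Fin k → ℝ) → (Fin m → ℝ)} (hf : IsReLUMLP f) (hg : IsReLUMLP g) :
    IsReLUMLP (fun x => f (g x)) := by
  induction hf with
  | of_affine hf => exact hg.affine_comp hf
  | comp _ ha ih => exact .comp ih ha

lemma relu_sub_relu_neg (t : ℝ) : relu t - relu (-t) = t := by
  unfold relu
  rcases le_total t 0 with h | h
  · rw [max_eq_right h, max_eq_left (by linarith)]; ring
  · rw [max_eq_left h, max_eq_right (by linarith)]; ring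

/-- A network may act on its own inputs while `a` further coordinates pass through unchanged: in
every layer these are transported as `t = relu t - relu (-t)`. This is what lets networks of
different depths be run in parallel. -/
lemma IsReLUMLP.carry {n m : ℕ} (a : ℕ) {g : (Fin n → ℝ) → (Fin m → ℝ)} (hg : IsReLUMLP g) :
    IsReLUMLP (fun z : Fin (a + n) → ℝ =>
      Fin.append (fun i : Fin a => z (Fin.castAdd n i)) (g (fun j => z (Fin.natAdd a j)))) := by
  induction hg with
  | @of_affine m g hg =>
    refine .of_affine (.of_components fun i => ?_)
    refine Fin.addCases (fun i => ?_) (fun j => ?_) i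
    · exact ⟨LinearMap.proj (Fin.castAdd n i), 0, fun x => by simp⟩
    · obtain ⟨A, b, h⟩ := (hg.comp_affine (IsAffineMap.reindex (Fin.natAdd a))).component j
      exact ⟨A, b, fun x => by simp [h]⟩
  | @comp k m g f hg hf ih =>
    -- the intermediate layer `(y, w) ↦ (y, -y, w)`
    have h1 : IsAffineMap (fun z : Fin (a + k) → ℝ =>
        Fin.append (Fin.append (fun i : Fin a => z (Fin.castAdd k i))
          (fun i : Fin a => - z (Fin.castAdd k i))) (fun j : Fin k => z (Fin.natAdd a j))) := by
      refine .of_components fun i => ?_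
      refine Fin.addCases (fun i => ?_) (fun j => ?_) i
      · refine Fin.addCases (fun i => ?_) (fun i => ?_) i
        · exact ⟨LinearMap.proj (Fin.castAdd k i), 0, fun x => by simp⟩
        · exact ⟨-LinearMap.proj (Fin.castAdd k i), 0, fun x => by
            simp [-Fin.natAdd_eq_addNat]⟩
      · exact ⟨LinearMap.proj (Fin.natAdd a j), 0, fun x => by simp⟩
    -- the output layer `(p, q, w) ↦ (p - q, f w)`
    have h2 : IsAffineMap (fun z : Fin ((a + a) + k) → ℝ =>
        Fin.append (fun i : Fin a => z (Fin.castAdd k (Fin.castAdd a i))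
          - z (Fin.castAdd k (Fin.natAdd a i))) (f (fun j : Fin k => z (Fin.natAdd (a + a) j)))) := by
      refine .of_components fun i => ?_
      refine Fin.addCases (fun i => ?_) (fun j => ?_) i
      · exact ⟨LinearMap.proj (R := ℝ) (φ := fun _ => ℝ) (Fin.castAdd k (Fin.castAdd a i))
          - LinearMap.proj (R := ℝ) (φ := fun _ => ℝ) (Fin.castAdd k (Fin.natAdd a i)), 0,
          fun x => by simp [-Fin.natAdd_eq_addNat]⟩
      · obtain ⟨A, b, h⟩ := (hf.comp_affine (IsAffineMap.reindex (Fin.natAdd (a + a)))).component j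
        exact ⟨A, b, fun x => by simp [h]⟩
    have h3 := IsReLUMLP.comp (ih.affine_comp h1) h2
    simpa [relu_sub_relu_neg, -Fin.natAdd_eq_addNat] using h3

lemma IsReLUMLP.append {n m₁ m₂ : ℕ} {g₁ : (Fin n → ℝ) → (Fin m₁ → ℝ)}
    {g₂ : (Fin n → ℝ) → (Fin m₂ → ℝ)} (h₁ : IsReLUMLP g₁) (h₂ : IsReLUMLP g₂) :
    IsReLUMLP (fun x => Fin.append (g₁ x) (g₂ x)) := by
  -- `x ↦ (x, x) ↦ (x, g₁ x) ↦ (g₁ x, x) ↦ (g₁ x, g₂ x)`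
  have hdup : IsReLUMLP (fun (x : Fin n → ℝ) i => x (Fin.addCases (m := n) (n := n) id id i)) :=
    .of_affine (.reindex _)
  have hx := (h₁.carry n).comp_mlp hdup
  have hsw := hx.affine_comp
    (IsAffineMap.reindex (Fin.addCases (m := m₁) (n := n) (Fin.natAdd n) (Fin.castAdd m₁)))
  have := (h₂.carry m₁).comp_mlp hsw
  simpa [-Fin.natAdd_eq_addNat] using this

lemma IsReLUMLP.family {n : ℕ} : ∀ {m : ℕ} {g : Fin m → (Fin n → ℝ) → (Fin 1 → ℝ)},
    (∀ i, IsReLUMLP (g i)) → IsReLUMLP (fun x i => g i x 0)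
  | 0, _, _ => .of_affine ⟨0, 0, fun x => funext fun i => i.elim0⟩
  | m + 1, g, h => by
    have h1 := (IsReLUMLP.family fun i : Fin m => h i.castSucc).append (h (Fin.last m))
    convert h1 using 3 with x i
    refine Fin.lastCases ?_ (fun i => ?_) i
    · exact (Fin.append_right _ (g (Fin.last m) x) 0).symm
    · exact (Fin.append_left (fun i : Fin m => g i.castSucc x 0) (g (Fin.last m) x) i).symm

section Realizable

variable {H : Type*} [NormedAddCommGroup H] [InnerProductSpace ℝ H]

/-- `g : H → ℝ` is a scalar ReLU network applied to the first `d` basis coefficients. -/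
def Realizable (s : HilbertBasis ℕ ℝ H) (d : ℕ) (g : H → ℝ) : Prop :=
  ∃ φ : (Fin d → ℝ) → (Fin 1 → ℝ), IsReLUMLP φ ∧ ∀ u, g u = φ (fun i : Fin d => ⟪u, s i⟫) 0

variable {s : HilbertBasis ℕ ℝ H} {d d' : ℕ} {g h : H → ℝ}

lemma Realizable.mono (hg : Realizable s d g) (hd : d ≤ d') : Realizable s d' g := by
  obtain ⟨φ, hφ, hu⟩ := hg
  exact ⟨_, hφ.comp_mlp (.of_affine (.reindex (Fin.castLE hd))), fun u => by simp [hu]⟩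

lemma Realizable.relu (hg : Realizable s d g) : Realizable s d (fun u => relu (g u)) := by
  obtain ⟨φ, hφ, hu⟩ := hg
  exact ⟨_, .comp hφ (.reindex id), fun u => by simp [hu]⟩

lemma Realizable.linComb (hg : Realizable s d g) (hh : Realizable s d h) (a b : ℝ) :
    Realizable s d (fun u => a * g u + b * h u) := by
  obtain ⟨φ, hφ, hu⟩ := hg
  obtain ⟨ψ, hψ, hv⟩ := hh
  have hA : IsAffineMap (fun (z : Fin (1 + 1) → ℝ) (_ : Fin 1) =>
      a * z (Fin.castAdd 1 0) + b * z (Fin.natAdd 1 0)) :=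
    .of_components fun _ => ⟨a • LinearMap.proj (Fin.castAdd 1 0)
      + b • LinearMap.proj (Fin.natAdd 1 0), 0, fun x => by simp⟩
  refine ⟨_, (hφ.append hψ).affine_comp hA, fun u => ?_⟩
  simp only [Fin.append_left, Fin.append_right, hu, hv]

lemma Realizable.max (hg : Realizable s d g) (hh : Realizable s d h) :
    Realizable s d (fun u => max (g u) (h u)) := by
  have := (hg.linComb hh 1 (-1)).relu.linComb hh 1 1
  convert this using 2 with u
  unfold _root_.relu
  rcases le_total (g u) (h u) with H | H
  · rw [max_eq_right H, max_eq_right (by linarith)]; ring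
  · rw [max_eq_left H, max_eq_left (by linarith)]; ring

lemma Realizable.min (hg : Realizable s d g) (hh : Realizable s d h) :
    Realizable s d (fun u => min (g u) (h u)) := by
  have := (hg.linComb hh 1 1).linComb (hg.max hh) 1 (-1)
  convert this using 2 with u
  linarith [min_add_max (g u) (h u)]

lemma realizable_affine_coord (s : HilbertBasis ℕ ℝ H) (i : ℕ) (a b : ℝ) :
    Realizable s (i + 1) (fun u => a * ⟪u, s i⟫ + b) :=
  ⟨fun x _ => a * x (Fin.last i) + b,
    .of_affine (.of_components fun _ => ⟨a • LinearMap.proj (Fin.last i), b, fun x => by simp⟩),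
    fun u => by simp⟩

/-- Realizable functions are uniformly dense in the continuous functions on a compact set, by the
lattice form of the Stone–Weierstrass theorem. -/
lemma exists_realizable_near (s : HilbertBasis ℕ ℝ H) {K : Set H}
    (hKc : IsCompact K) {G : H → ℝ} (hG : ContinuousOn G K) {δ : ℝ} (hδ : 0 < δ) :
    ∃ d g, Realizable s d g ∧ ∀ u ∈ K, |G u - g u| ≤ δ := by
  have : CompactSpace K := isCompact_iff_compactSpace.mp hKc
  let L : Set C(K, ℝ) := {c | ∃ d g, Realizable s d g ∧ ∀ u : K, c u = g u}
  have htop : closure L = ⊤ := by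
    refine ContinuousMap.sublattice_closure_eq_top L ?_ ?_ ?_ ?_
    · exact ⟨ContinuousMap.const K 0, 1, _, realizable_affine_coord s 0 0 0, fun u => by simp⟩
    · rintro c ⟨d, g, hg, hc⟩ c' ⟨d', g', hg', hc'⟩
      exact ⟨_, _, (hg.mono (le_max_left d d')).min (hg'.mono (le_max_right d d')),
        fun u => by simp [hc, hc']⟩
    · rintro c ⟨d, g, hg, hc⟩ c' ⟨d', g', hg', hc'⟩
      exact ⟨_, _, (hg.mono (le_max_left d d')).max (hg'.mono (le_max_right d d')),
        fun u => by simp [hc, hc']⟩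
    · intro v x y
      by_cases hxy : x = y
      · subst hxy
        exact ⟨ContinuousMap.const K (v x), ⟨1, _, realizable_affine_coord s 0 0 (v x),
          fun u => by simp⟩, rfl, rfl⟩
      · -- a coordinate separating `x` from `y`, followed by the interpolating affine map
        obtain ⟨i, hi⟩ : ∃ i, ⟪(x : H), s i⟫ ≠ ⟪(y : H), s i⟫ := by
          by_contra! hcon
          apply hxy
          apply Subtype.ext
          apply s.repr.injective
          ext i
          rw [s.repr_apply_apply, s.repr_apply_apply, real_inner_comm, hcon, real_inner_comm]
        have hne : ⟪(y : H), s i⟫ - ⟪(x : H), s i⟫ ≠ 0 := sub_ne_zero.mpr hi.symm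
        set a := (v y - v x) / (⟪(y : H), s i⟫ - ⟪(x : H), s i⟫) with ha
        refine ⟨⟨fun u : K => a * ⟪(u : H), s i⟫ + (v x - a * ⟪(x : H), s i⟫), by fun_prop⟩,
          ⟨_, _, realizable_affine_coord s i a (v x - a * ⟪(x : H), s i⟫), fun u => rfl⟩, ?_, ?_⟩
        · simp
        · have : a * (⟪(y : H), s i⟫ - ⟪(x : H), s i⟫) = v y - v x := div_mul_cancel₀ _ hne
          simp only [ContinuousMap.coe_mk]
          linarith
  let c : C(K, ℝ) := ⟨K.domRestrict G, hG.domRestrict⟩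
  have hc : c ∈ closure L := by rw [htop]; trivial
  obtain ⟨c', ⟨d, g, hg, hc'⟩, hdist⟩ := Metric.mem_closure_iff.mp hc δ hδ
  refine ⟨d, g, hg, fun u hu => ?_⟩
  have h1 := ContinuousMap.dist_apply_le_dist (f := c) (g := c') ⟨u, hu⟩
  rw [Real.dist_eq, hc' ⟨u, hu⟩] at h1
  exact h1.trans hdist.le

end Realizable

/-- The truncated basis expansions converge uniformly on compact sets: they converge pointwise, and
by Bessel's inequality they are all 1-Lipschitz. -/
lemma exists_uniform_truncation {H : Type*} [NormedAddCommGroup H] [InnerProductSpace ℝ H]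
    (s : HilbertBasis ℕ ℝ H) {C : Set H} (hC : IsCompact C) {δ : ℝ} (hδ : 0 < δ) :
    ∃ M : ℕ, ∀ Q ≥ M, ∀ y ∈ C, ‖y - ∑ i ∈ Finset.range Q, ⟪y, s i⟫ • s i‖ ≤ δ := by
  have hbound : ∀ (Q : ℕ) (z : H), ‖∑ i ∈ Finset.range Q, ⟪z, s i⟫ • s i‖ ≤ ‖z‖ := by
    intro Q z
    have h1 : ‖∑ i ∈ Finset.range Q, ⟪z, s i⟫ • s i‖ ^ 2 ≤ ‖z‖ ^ 2 := by
      rw [← real_inner_self_eq_norm_sq, s.orthonormal.inner_sum]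
      refine le_trans (le_of_eq ?_) (s.orthonormal.sum_inner_products_le z (s := Finset.range Q))
      refine Finset.sum_congr rfl fun i _ => ?_
      simp [real_inner_comm, sq]
    exact (sq_le_sq₀ (norm_nonneg _) (norm_nonneg _)).mp h1
  have hpt : ∀ z : H, ∃ M : ℕ, ∀ Q ≥ M,
      ‖z - ∑ i ∈ Finset.range Q, ⟪z, s i⟫ • s i‖ < δ / 3 := by
    intro z
    have h1 := (s.hasSum_repr z).tendsto_sum_nat
    obtain ⟨M, hM⟩ := Metric.tendsto_atTop.mp h1 (δ / 3) (by positivity)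
    refine ⟨M, fun Q hQ => ?_⟩
    have := hM Q hQ
    rw [dist_comm, dist_eq_norm] at this
    simpa [s.repr_apply_apply, real_inner_comm] using this
  choose M hM using hpt
  obtain ⟨t, -, htf, hcov⟩ := hC.finite_cover_balls (e := δ / 3) (by positivity)
  refine ⟨htf.toFinset.sup M, fun Q hQ y hy => ?_⟩
  obtain ⟨z, hz, hyz⟩ := Set.mem_iUnion₂.mp (hcov hy)
  have hQz : M z ≤ Q := (Finset.le_sup (f := M) (htf.mem_toFinset.mpr hz)).trans hQ
  have h1 := hM z Q hQz
  have h2 : ‖y - z‖ < δ / 3 := by simpa [dist_eq_norm] using hyz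
  have h3 := hbound Q (z - y)
  rw [norm_sub_rev] at h3
  have h4 : y - ∑ i ∈ Finset.range Q, ⟪y, s i⟫ • s i
      = (y - z) + (z - ∑ i ∈ Finset.range Q, ⟪z, s i⟫ • s i)
        + ∑ i ∈ Finset.range Q, ⟪z - y, s i⟫ • s i := by
    simp only [inner_sub_left, sub_smul, Finset.sum_sub_distrib]
    abel
  rw [h4]
  refine (norm_add₃_le).trans ?_
  have h5 : ‖z - y‖ = ‖y - z‖ := norm_sub_rev _ _
  linarith [hbound Q (z - y)]

/-- Universal approximation by attentional neural operators: encoder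
`E_d(u) = (⟪u,s_1⟫,…,⟪u,s_d⟫)` (the Hilbert basis `s : HilbertBasis ℕ ℝ H` represents the
paper's `(s_i)_{i∈ℕ₊}` via the index shift), an MLP processor `f`, a values MLP `𝒱`, and a
softmax-attention decoder built from basis elements `s (idx n q)`. -/
theorem stmt_15 {H : Type*} [NormedAddCommGroup H] [InnerProductSpace ℝ H] [CompleteSpace H]
    [TopologicalSpace.SeparableSpace H]
    (s : HilbertBasis ℕ ℝ H) (K : Set H) (hK : K.Nonempty) (hKc : IsCompact K)
    (F : H → H) (hF : ContinuousOn F K) (ε : ℝ) (hε : 0 < ε) :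
    ∃ d N Q : ℕ, 0 < d ∧ 0 < N ∧ 0 < Q ∧
      ∃ f : (Fin d → ℝ) → (Fin N → ℝ), IsReLUMLP f ∧
      ∃ V : (Fin d → ℝ) → (Fin (N * Q) → ℝ), IsReLUMLP V ∧
      ∃ idx : Fin N → Fin Q → ℕ,
        ∀ u ∈ K,
          ‖F u - ∑ n : Fin N,
            (Real.exp (f (fun i : Fin d => ⟪u, s i⟫) n) /
              ∑ j : Fin N, Real.exp (f (fun i : Fin d => ⟪u, s i⟫) j)) •
            ∑ q : Fin Q,
              V (fun i : Fin d => ⟪u, s i⟫) (finProdFinEquiv (n, q)) • s (idx n q)‖ ≤ ε := by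
  obtain ⟨M, hM⟩ := exists_uniform_truncation s (hKc.image_of_continuousOn hF) (half_pos hε)
  -- `M + 1` coefficients, so that `Q` is positive
  have hδ : 0 < ε / 2 / ((M + 1 : ℕ) : ℝ) := by positivity
  have happ : ∀ q : Fin (M + 1), ∃ d g, Realizable s d g ∧
      ∀ u ∈ K, |⟪F u, s q⟫ - g u| ≤ ε / 2 / ((M + 1 : ℕ) : ℝ) := fun q =>
    exists_realizable_near s hKc (G := fun u => ⟪F u, s q⟫)
      (hF.inner continuousOn_const) hδ
  choose d g hg hgF using happ
  have hg' : ∀ q, Realizable s (Finset.univ.sup d + 1) (g q) := fun q =>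
    (hg q).mono ((Finset.le_sup (f := d) (Finset.mem_univ q)).trans (Nat.le_succ _))
  choose φ hφ hφu using hg'
  refine ⟨Finset.univ.sup d + 1, 1, M + 1, Nat.succ_pos _, one_pos, Nat.succ_pos _,
    fun _ _ => 0, .of_affine ⟨0, 0, fun x => by ext; simp⟩,
    fun x k => φ (finProdFinEquiv.symm k).2 x 0,
    IsReLUMLP.family (g := fun k : Fin (1 * (M + 1)) => φ (finProdFinEquiv.symm k).2)
      fun k => hφ _, fun _ q => q, fun u hu => ?_⟩
  have hsimp : ∀ x : H, ‖F u - x‖ ≤ ‖F u - ∑ q : Fin (M + 1), ⟪F u, s q⟫ • s q‖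
      + ‖∑ q : Fin (M + 1), ⟪F u, s q⟫ • s q - x‖ := fun x => norm_sub_le_norm_sub_add_norm_sub _ _ _
  simp only [Finset.univ_unique, Finset.sum_singleton, Real.exp_zero, div_one, one_smul,
    Equiv.symm_apply_apply, ← hφu]
  refine (hsimp _).trans ?_
  have h1 : ‖F u - ∑ q : Fin (M + 1), ⟪F u, s q⟫ • s q‖ ≤ ε / 2 := by
    rw [Fin.sum_univ_eq_sum_range (fun i => ⟪F u, s i⟫ • s i)]
    exact hM (M + 1) (Nat.le_succ M) _ (Set.mem_image_of_mem F hu)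
  have h2 : ‖∑ q : Fin (M + 1), ⟪F u, s q⟫ • s q - ∑ q : Fin (M + 1), g q u • s q‖ ≤ ε / 2 := by
    rw [← Finset.sum_sub_distrib]
    calc ‖∑ q : Fin (M + 1), (⟪F u, s q⟫ • s q - g q u • s q)‖
        ≤ ∑ _q : Fin (M + 1), ε / 2 / ((M + 1 : ℕ) : ℝ) := by
          refine norm_sum_le_of_le _ fun q _ => ?_
          rw [← sub_smul, norm_smul, s.orthonormal.1, mul_one]
          exact hgF q u hu
      _ = ε / 2 := by
          rw [Finset.sum_const, Finset.card_univ, Fintype.card_fin, nsmul_eq_mul]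
          exact mul_div_cancel₀ _ (by positivity)
  linarith
end

section
/- Let X and Y be real normed spaces, K ⊆ X a nonempty set, C, C̃ ≥ 0, α ∈ (0,1], and δ₁, δ₂ ≥ 0. Let J : X × Y → ℝ satisfy |J(x,y) − J(x',y')| ≤ C(‖x − x'‖ + ‖y − y'‖) for all x,x',y,y'; let U : X → Y satisfy ‖U(x) − U(x')‖ ≤ C̃·‖x − x'‖^α for all x,x'; let p : X → X satisfy ‖x − p(x)‖ ≤ δ₁ for all x ∈ K; and let Û : X → Y satisfy ‖U(p(x)) − Û(p(x))‖ ≤ δ₂ for all x ∈ K. Suppose x* ∈ K satisfies J(x*, U(x*)) ≤ J(x, U(x)) for all x ∈ K. Then for every x ∈ K, J(p(x*), Û(p(x*))) ≤ J(x, U(x)) + C·(δ₁ + C̃·δ₁^α + δ₂). -/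
/-!
By optimality of `xstar` it suffices to compare `J` at `(p xstar, Uhat (p xstar))` with `J` at
`(xstar, U xstar)`. The controls differ by at most `δ₁`; the responses differ by at most
`Ct * δ₁ ^ α` (Hölder continuity of `U`) plus `δ₂` (approximation of `U` by `Uhat`). The Lipschitz
bound on `J` then gives the claim.
-/

theorem stmt_18 {X Y : Type*} [NormedAddCommGroup X] [NormedSpace ℝ X]
    [NormedAddCommGroup Y] [NormedSpace ℝ Y]
    (K : Set X) (hK : K.Nonempty) (C Ct : ℝ) (hC : 0 ≤ C) (hCt : 0 ≤ Ct)
    (α : ℝ) (hα : α ∈ Set.Ioc (0:ℝ) 1) (δ₁ δ₂ : ℝ) (hδ₁ : 0 ≤ δ₁) (hδ₂ : 0 ≤ δ₂)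
    (J : X → Y → ℝ)
    (hJ : ∀ x x' : X, ∀ y y' : Y, |J x y - J x' y'| ≤ C * (‖x - x'‖ + ‖y - y'‖))
    (U : X → Y) (hU : ∀ x x' : X, ‖U x - U x'‖ ≤ Ct * ‖x - x'‖ ^ α)
    (p : X → X) (hp : ∀ x ∈ K, ‖x - p x‖ ≤ δ₁)
    (Uhat : X → Y) (hUhat : ∀ x ∈ K, ‖U (p x) - Uhat (p x)‖ ≤ δ₂)
    (xstar : X) (hxstar : xstar ∈ K)
    (hopt : ∀ x ∈ K, J xstar (U xstar) ≤ J x (U x)) :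
    ∀ x ∈ K, J (p xstar) (Uhat (p xstar)) ≤ J x (U x) + C * (δ₁ + Ct * δ₁ ^ α + δ₂) := by
  intro x hx
  have hproj := hp xstar hxstar
  have hpow : ‖xstar - p xstar‖ ^ α ≤ δ₁ ^ α :=
    Real.rpow_le_rpow (norm_nonneg _) hproj hα.1.le
  -- Triangle inequality through `U (p xstar)`: Hölder error plus approximation error.
  have hresp : ‖U xstar - Uhat (p xstar)‖ ≤ Ct * δ₁ ^ α + δ₂ :=
    calc ‖U xstar - Uhat (p xstar)‖
        ≤ ‖U xstar - U (p xstar)‖ + ‖U (p xstar) - Uhat (p xstar)‖ :=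
          norm_sub_le_norm_sub_add_norm_sub _ _ _
      _ ≤ Ct * δ₁ ^ α + δ₂ :=
          add_le_add ((hU _ _).trans (mul_le_mul_of_nonneg_left hpow hCt)) (hUhat _ hxstar)
  have hbound : C * (‖xstar - p xstar‖ + ‖U xstar - Uhat (p xstar)‖)
      ≤ C * (δ₁ + Ct * δ₁ ^ α + δ₂) :=
    mul_le_mul_of_nonneg_left (by linarith) hC
  have hlip := (abs_le.mp (hJ xstar (p xstar) (U xstar) (Uhat (p xstar)))).1
  linarith [hopt x hx]
end
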